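/- Let G and H be finite simple graphs on m and n vertices, and let λ₀ ∈ ℂ be a root of f_H which is not a pole of the coronal χ_H(λ) (i.e., λ₀ is not a root of the denominator of χ_H written as a reduced fraction). Then (λ − λ₀)^m divides the characteristic polynomial f_{G∘H}(λ); in particular λ₀ is an eigenvalue of G∘H with multiplicity at least m. -/

import Mathlib

open Matrix Polynomial

/-- The characteristic matrix `λ I - B` of `B`, over the field `ℂ(λ)` of rational functions. -/
noncomputable def charMatRatFunc {V : Type*} [Fintype V] [DecidableEq V]
    (B : Matrix V V ℂ) : Matrix V V (RatFunc ℂ) :=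
  Matrix.scalar V (RatFunc.X : RatFunc ℂ) - B.map (algebraMap ℂ (RatFunc ℂ))

/-- The coronal of a matrix `B`: the sum of the entries of `(λ I - B)⁻¹` over `ℂ(λ)`. -/
noncomputable def coronal {V : Type*} [Fintype V] [DecidableEq V]
    (B : Matrix V V ℂ) : RatFunc ℂ :=
  ∑ i, ∑ j, (charMatRatFunc B)⁻¹ i j

/-- The adjacency matrix of the corona `G ∘ H`. -/
def coronaMatrix {α β : Type*} (A : Matrix α α ℂ) (B : Matrix β β ℂ)
    [DecidableEq α] :
    Matrix (α ⊕ β × α) (α ⊕ β × α) ℂ :=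
  Matrix.fromBlocks A
    (Matrix.of fun i p => if i = p.2 then 1 else 0)
    (Matrix.of fun p j => if p.2 = j then 1 else 0)
    (Matrix.of fun p q => if p.2 = q.2 then B p.1 q.1 else 0)

/-!
The Schur complement of the block `(λ I - B) ⊗ I_m` in the characteristic matrix of the corona is
`λ I - A - χ_B(λ) I`, whence `f_{A∘B} = f_B ^ m * det (λ I - A - χ_B I)` over `ℂ(λ)`. The second
factor contributes only powers of the reduced denominator of `χ_B` to the denominator, so a factor
`p` of `f_B` coprime to that denominator survives as `p ^ m ∣ f_{A∘B}`.
-/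

open scoped Kronecker

theorem kronecker_map {R S l m n p : Type*} [NonAssocSemiring R] [NonAssocSemiring S]
    (f : R →+* S) (D : Matrix l m R) (N : Matrix n p R) :
    (D ⊗ₖ N).map f = D.map f ⊗ₖ N.map f :=
  ext fun _ _ => map_mul f _ _

/-- The off-diagonal block `1_nᵀ ⊗ I_m` of the adjacency matrix of a corona, joining the vertex `i`
of the base graph to every vertex of the `i`-th copy. The trivial row index of `1_nᵀ` is dropped, so
that rows are indexed by `α` rather than `Unit × α`. -/
def coronaJoin (R α β : Type*) [Zero R] [One R] [DecidableEq α] : Matrix α (β × α) R :=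
  Matrix.of fun i p => if i = p.2 then 1 else 0

theorem coronaJoin_map {R S α β : Type*} [NonAssocSemiring R] [NonAssocSemiring S] [DecidableEq α]
    (f : R →+* S) : (coronaJoin R α β).map f = coronaJoin S α β := by
  ext i p
  simp [coronaJoin, apply_ite f]

theorem coronaJoin_mul_kronecker_mul_transpose {R α α' β β' : Type*} [Semiring R]
    [Fintype α] [DecidableEq α] [Fintype α'] [DecidableEq α'] [Fintype β] [Fintype β']
    (D : Matrix β β' R) (N : Matrix α α' R) :
    coronaJoin R α β * (D ⊗ₖ N) * (coronaJoin R α' β')ᵀ = (∑ k, ∑ l, D k l) • N := by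
  ext i j
  simp only [coronaJoin, mul_apply, of_apply, transpose_apply, kroneckerMap_apply,
    Matrix.smul_apply, Fintype.sum_prod_type, ite_mul, mul_ite, one_mul, mul_one, zero_mul,
    mul_zero, Finset.sum_ite_eq, Finset.mem_univ, if_true, smul_eq_mul, Finset.sum_mul]
  exact Finset.sum_comm

theorem coronaMatrix_eq_fromBlocks {α β : Type*} [DecidableEq α] (A : Matrix α α ℂ)
    (B : Matrix β β ℂ) :
    coronaMatrix A B =
      fromBlocks A (coronaJoin ℂ α β) (coronaJoin ℂ α β)ᵀ (B ⊗ₖ (1 : Matrix α α ℂ)) := by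
  ext (i | p) (j | q) <;> simp [coronaMatrix, coronaJoin, one_apply, eq_comm]

section

variable {R α β : Type*} [CommRing R] [Fintype α] [DecidableEq α] [Fintype β] [DecidableEq β]

theorem det_fromBlocks_coronaJoin (M : Matrix α α R) {D : Matrix β β R} (hD : IsUnit D.det) :
    (fromBlocks M (-coronaJoin R α β) (-(coronaJoin R α β)ᵀ) (D ⊗ₖ (1 : Matrix α α R))).det =
      D.det ^ Fintype.card α * (M - scalar α (∑ k, ∑ l, D⁻¹ k l)).det := by
  have det_block : (D ⊗ₖ (1 : Matrix α α R)).det = D.det ^ Fintype.card α := by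
    rw [det_kronecker, det_one, one_pow, mul_one]
  let _ : Invertible (D ⊗ₖ (1 : Matrix α α R)) :=
    invertibleOfIsUnitDet _ (det_block ▸ hD.pow _)
  rw [det_fromBlocks₂₂, det_block, invOf_eq_nonsing_inv, inv_kronecker, inv_one, Matrix.neg_mul,
    Matrix.neg_mul, Matrix.mul_neg, neg_neg, coronaJoin_mul_kronecker_mul_transpose,
    smul_one_eq_diagonal, scalar_apply]

theorem charmatrix_kronecker_one (B : Matrix β β R) :
    (B ⊗ₖ (1 : Matrix α α R)).charmatrix = B.charmatrix ⊗ₖ (1 : Matrix α α R[X]) := by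
  ext ⟨k, i⟩ ⟨l, j⟩ : 2
  by_cases hkl : k = l <;> by_cases hij : i = j <;> simp [hkl, hij]

theorem charmatrix_map_algebraMap_ratFunc (B : Matrix β β ℂ) :
    B.charmatrix.map (algebraMap ℂ[X] (RatFunc ℂ)) = charMatRatFunc B := by
  ext i j
  by_cases h : i = j <;> simp [charMatRatFunc, h, RatFunc.algebraMap_eq_C]

theorem det_charMatRatFunc (B : Matrix β β ℂ) :
    (charMatRatFunc B).det = algebraMap ℂ[X] (RatFunc ℂ) B.charpoly := by
  rw [← charmatrix_map_algebraMap_ratFunc, charpoly, RingHom.map_det, RingHom.mapMatrix_apply]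

theorem isUnit_det_charMatRatFunc (B : Matrix β β ℂ) : IsUnit (charMatRatFunc B).det := by
  rw [det_charMatRatFunc, isUnit_iff_ne_zero]
  exact RatFunc.algebraMap_ne_zero B.charpoly_monic.ne_zero

theorem charMatRatFunc_coronaMatrix (A : Matrix α α ℂ) (B : Matrix β β ℂ) :
    charMatRatFunc (coronaMatrix A B) =
      fromBlocks (charMatRatFunc A) (-coronaJoin _ α β) (-(coronaJoin _ α β)ᵀ)
        (charMatRatFunc B ⊗ₖ (1 : Matrix α α (RatFunc ℂ))) := by
  simp only [← charmatrix_map_algebraMap_ratFunc, coronaMatrix_eq_fromBlocks,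
    charmatrix_fromBlocks, charmatrix_kronecker_one, fromBlocks_map, kronecker_map,
    Matrix.map_neg (algebraMap ℂ[X] (RatFunc ℂ)) (map_neg _), transpose_map, coronaJoin_map,
    Matrix.map_one _ (map_zero _) (map_one _)]

theorem algebraMap_charpoly_coronaMatrix (A : Matrix α α ℂ) (B : Matrix β β ℂ) :
    algebraMap ℂ[X] (RatFunc ℂ) (coronaMatrix A B).charpoly =
      algebraMap ℂ[X] (RatFunc ℂ) B.charpoly ^ Fintype.card α *
        (charMatRatFunc A - scalar α (coronal B)).det := by
  rw [← det_charMatRatFunc, charMatRatFunc_coronaMatrix,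
    det_fromBlocks_coronaJoin _ (isUnit_det_charMatRatFunc B), det_charMatRatFunc, coronal]

theorem map_denom_smul_charmatrix_sub_scalar_num (A : Matrix α α ℂ) (χ : RatFunc ℂ) :
    (χ.denom • A.charmatrix - scalar α χ.num).map (algebraMap ℂ[X] (RatFunc ℂ)) =
      algebraMap ℂ[X] (RatFunc ℂ) χ.denom • (charMatRatFunc A - scalar α χ) := by
  have denom_mul_self : algebraMap ℂ[X] (RatFunc ℂ) χ.denom * χ = algebraMap _ _ χ.num := by
    rw [mul_comm, ← eq_div_iff (RatFunc.algebraMap_ne_zero χ.denom_ne_zero), χ.num_div_denom]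
  rw [← charmatrix_map_algebraMap_ratFunc]
  ext i j
  by_cases h : i = j <;> simp [h, mul_sub, denom_mul_self]

theorem denom_pow_mul_charpoly_coronaMatrix (A : Matrix α α ℂ) (B : Matrix β β ℂ) :
    (coronal B).denom ^ Fintype.card α * (coronaMatrix A B).charpoly =
      B.charpoly ^ Fintype.card α *
        ((coronal B).denom • A.charmatrix - scalar α (coronal B).num).det := by
  apply RatFunc.algebraMap_injective ℂ
  rw [map_mul, map_mul, map_pow, map_pow, algebraMap_charpoly_coronaMatrix, RingHom.map_det,
    RingHom.mapMatrix_apply, map_denom_smul_charmatrix_sub_scalar_num, det_smul, mul_left_comm]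

theorem corona_old_eigenvalues_general (A : Matrix α α ℂ) (B : Matrix β β ℂ) {p : ℂ[X]}
    (hp : p ∣ B.charpoly) (hcop : IsCoprime p (coronal B).denom) :
    p ^ Fintype.card α ∣ (coronaMatrix A B).charpoly := by
  suffices h : p ^ Fintype.card α ∣
      (coronal B).denom ^ Fintype.card α * (coronaMatrix A B).charpoly from
    hcop.pow.dvd_of_dvd_mul_left h
  rw [denom_pow_mul_charpoly_coronaMatrix]
  exact (pow_dvd_pow_of_dvd hp _).mul_right _

end

theorem isCoprime_X_sub_C_of_eval_ne_zero {K : Type*} [Field K] {a : K} {q : K[X]}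
    (hq : q.eval a ≠ 0) : IsCoprime (X - C a) q :=
  (irreducible_X_sub_C a).coprime_iff_not_dvd.2 fun h => hq (dvd_iff_isRoot.1 h)

/-- If `λ₀` is a root of `f_H` which is not a pole of the coronal `χ_H` (i.e. not a root of the
denominator of `χ_H` written as a reduced fraction), then `(λ - λ₀)^m` divides `f_{G∘H}`;
in particular `λ₀` is an eigenvalue of `G ∘ H` of multiplicity at least `m`. -/
theorem corona_old_eigenvalues {m n : ℕ} (G : SimpleGraph (Fin m)) (H : SimpleGraph (Fin n))
    [DecidableRel G.Adj] [DecidableRel H.Adj] (lam0 : ℂ)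
    (hroot : (H.adjMatrix ℂ).charpoly.eval lam0 = 0)
    (hpole : (coronal (H.adjMatrix ℂ)).denom.eval lam0 ≠ 0) :
    (Polynomial.X - Polynomial.C lam0) ^ m ∣
      (coronaMatrix (G.adjMatrix ℂ) (H.adjMatrix ℂ)).charpoly := by
  simpa only [Fintype.card_fin] using corona_old_eigenvalues_general (G.adjMatrix ℂ) (H.adjMatrix ℂ)
    (dvd_iff_isRoot.2 hroot) (isCoprime_X_sub_C_of_eval_ne_zero hpole)
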